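/- If g : (0,∞) → ℝ is convex and continuous, then the function φ(W) = tr(g(W)) = Σᵢ g(λᵢ(W)) is convex on the set of d×d real symmetric positive definite matrices. -/

import Mathlib

open Matrix

/-- `φ(W) = tr(g(W)) = ∑ᵢ g(λᵢ(W))` for a Hermitian (symmetric) matrix `W`. -/
noncomputable def phi {d : ℕ} (g : ℝ → ℝ) (W : Matrix (Fin d) (Fin d) ℝ) : ℝ :=
  if h : W.IsHermitian then ∑ i, g (h.eigenvalues i) else 0

/-! Let `U` diagonalize `C = aA + bB`. The eigenvalues of `C` are the diagonal entries of
`U* C U`, hence the combinations with weights `a`, `b` of those of `U* A U` and `U* B U`, and scalar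
convexity of `g` applies entry by entry. By Schur, the diagonal of `U* A U` is the image of the
spectrum of `A` under a doubly stochastic matrix, so Jensen bounds the sum of `g` over that
diagonal by `tr g(A)` (Peierls' inequality). -/

section DoublyStochastic

variable {R n : Type*} [Field R] [LinearOrder R] [IsStrictOrderedRing R] [Fintype n] [DecidableEq n]
  {s : Set R} {M : Matrix n n R} {x : n → R}

lemma mulVec_apply_mem_of_mem_rowStochastic (hs : Convex R s) (hM : M ∈ rowStochastic R n)
    (hx : ∀ i, x i ∈ s) (j : n) : (M *ᵥ x) j ∈ s :=
  hs.sum_mem (fun _ _ ↦ nonneg_of_mem_rowStochastic hM) (sum_row_of_mem_rowStochastic hM j)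
    fun i _ ↦ hx i

lemma sum_map_mulVec_le_of_mem_doublyStochastic {β : Type*} [AddCommGroup β] [PartialOrder β]
    [IsOrderedAddMonoid β] [Module R β] [IsStrictOrderedModule R β] {f : R → β}
    (hf : ConvexOn R s f) (hM : M ∈ doublyStochastic R n) (hx : ∀ i, x i ∈ s) :
    ∑ j, f ((M *ᵥ x) j) ≤ ∑ i, f (x i) :=
  calc
    ∑ j, f ((M *ᵥ x) j) ≤ ∑ j, ∑ i, M j i • f (x i) :=
      Finset.sum_le_sum fun j _ ↦ hf.map_sum_le (fun _ _ ↦ nonneg_of_mem_doublyStochastic hM)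
        (sum_row_of_mem_doublyStochastic hM j) fun i _ ↦ hx i
    _ = ∑ i, (∑ j, M j i) • f (x i) := by
      rw [Finset.sum_comm]
      simp only [Finset.sum_smul]
    _ = ∑ i, f (x i) := by simp only [sum_col_of_mem_doublyStochastic hM, one_smul]

end DoublyStochastic

variable {n 𝕜 : Type*} [RCLike 𝕜]

/-- The matrix of squared moduli of the entries of `U`. For unitary `U` it is doubly stochastic,
and the matrices of this form are those called unistochastic. -/
def unistochastic (U : Matrix n n 𝕜) : Matrix n n ℝ :=
  U.map (‖·‖ ^ 2)

variable [Fintype n]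

/-- The values of the quadratic form of `A` at the columns of `U`, i.e. the diagonal of `U* A U`.
These entries are real for Hermitian `A`; the real part makes the map real-valued for all `A`. -/
def conjDiag (U : Matrix n n 𝕜) : Matrix n n 𝕜 →ₗ[ℝ] n → ℝ where
  toFun A j := RCLike.re ((star U * A * U) j j)
  map_add' A B := by ext j; simp [mul_add, add_mul]
  map_smul' a A := by ext j; simp [RCLike.smul_re]

variable [DecidableEq n] {A B : Matrix n n 𝕜} {s : Set ℝ}

lemma unistochastic_mem_doublyStochastic {U : Matrix n n 𝕜} (hU : U ∈ unitaryGroup n 𝕜) :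
    unistochastic U ∈ doublyStochastic ℝ n := by
  refine mem_doublyStochastic_iff_sum.2 ⟨fun i j ↦ sq_nonneg _, fun i ↦ ?_, fun j ↦ ?_⟩
  · have h : (U * star U) i i = 1 := by rw [mem_unitaryGroup_iff.1 hU, one_apply_eq]
    simp only [mul_apply, star_apply, RCLike.star_def, RCLike.mul_conj] at h
    exact_mod_cast h
  · have h : (star U * U) j j = 1 := by rw [mem_unitaryGroup_iff'.1 hU, one_apply_eq]
    simp only [mul_apply, star_apply, RCLike.star_def, RCLike.conj_mul] at h
    exact_mod_cast h

lemma conjDiag_eq_unistochastic_mulVec_eigenvalues (hA : A.IsHermitian) (U : Matrix n n 𝕜) :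
    conjDiag U A = unistochastic (star U * hA.eigenvectorUnitary.1) *ᵥ hA.eigenvalues := by
  set Q : Matrix n n 𝕜 := star U * hA.eigenvectorUnitary.1 with hQ
  have hconj : star U * A * U = Q * diagonal (RCLike.ofReal ∘ hA.eigenvalues) * star Q := by
    conv_lhs => rw [hA.spectral_theorem, Unitary.conjStarAlgAut_apply]
    simp only [hQ, star_mul, star_star, mul_assoc]
  ext j
  have hterm (i : n) : RCLike.re (Q j i * (hA.eigenvalues i : 𝕜) * star (Q j i)) =
      ‖Q j i‖ ^ 2 * hA.eigenvalues i := by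
    rw [mul_right_comm, RCLike.star_def, RCLike.mul_conj]
    norm_cast
  simp only [conjDiag, LinearMap.coe_mk, AddHom.coe_mk, hconj, mul_apply (N := star Q),
    mul_diagonal, star_apply, map_sum, Function.comp_apply, hterm]
  rfl

lemma conjDiag_eigenvectorUnitary (hA : A.IsHermitian) :
    conjDiag hA.eigenvectorUnitary.1 A = hA.eigenvalues := by
  ext j
  have h := hA.conjStarAlgAut_star_eigenvectorUnitary
  rw [Unitary.conjStarAlgAut_star_apply] at h
  simp [conjDiag, h]

lemma conjDiag_apply_mem (hs : Convex ℝ s) (hA : A.IsHermitian) (hAs : spectrum ℝ A ⊆ s)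
    (U : unitaryGroup n 𝕜) (j : n) : conjDiag U.1 A j ∈ s := by
  rw [conjDiag_eq_unistochastic_mulVec_eigenvalues hA]
  exact mulVec_apply_mem_of_mem_rowStochastic hs
    (mem_doublyStochastic_iff_mem_rowStochastic_and_mem_colStochastic.1
      (unistochastic_mem_doublyStochastic (star U * hA.eigenvectorUnitary).2)).1
    (fun i ↦ hAs (hA.eigenvalues_mem_spectrum_real i)) j

lemma trace_cfc_eq_sum_eigenvalues (hA : A.IsHermitian) (g : ℝ → ℝ) :
    (cfc g A).trace = ∑ i, (g (hA.eigenvalues i) : 𝕜) := by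
  rw [hA.cfc_eq, IsHermitian.cfc, Unitary.conjStarAlgAut_apply, trace_mul_cycle,
    Unitary.coe_star_mul_self, one_mul, trace_diagonal]
  rfl

lemma re_trace_cfc_eq_sum_eigenvalues (hA : A.IsHermitian) (g : ℝ → ℝ) :
    RCLike.re (cfc g A).trace = ∑ i, g (hA.eigenvalues i) := by
  simp only [trace_cfc_eq_sum_eigenvalues hA, map_sum, RCLike.ofReal_re]

theorem sum_map_conjDiag_le_re_trace_cfc {g : ℝ → ℝ} (hg : ConvexOn ℝ s g) (hA : A.IsHermitian)
    (hAs : spectrum ℝ A ⊆ s) (U : unitaryGroup n 𝕜) :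
    ∑ j, g (conjDiag U.1 A j) ≤ RCLike.re (cfc g A).trace := by
  rw [conjDiag_eq_unistochastic_mulVec_eigenvalues hA, re_trace_cfc_eq_sum_eigenvalues hA]
  exact sum_map_mulVec_le_of_mem_doublyStochastic hg
    (unistochastic_mem_doublyStochastic (star U * hA.eigenvectorUnitary).2)
    fun i ↦ hAs (hA.eigenvalues_mem_spectrum_real i)

lemma eigenvalues_smul_add_smul {a b : ℝ} (h : (a • A + b • B).IsHermitian) :
    h.eigenvalues =
      a • conjDiag h.eigenvectorUnitary.1 A + b • conjDiag h.eigenvectorUnitary.1 B := by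
  rw [← map_smul, ← map_smul, ← map_add, conjDiag_eigenvectorUnitary]

theorem convex_setOf_isHermitian_spectrum_subset (hs : Convex ℝ s) :
    Convex ℝ {W : Matrix n n 𝕜 | W.IsHermitian ∧ spectrum ℝ W ⊆ s} := by
  rintro A ⟨hA, hAs⟩ B ⟨hB, hBs⟩ a b ha hb hab
  have hC : (a • A + b • B).IsHermitian :=
    ((IsSelfAdjoint.all a).smul hA).add ((IsSelfAdjoint.all b).smul hB)
  refine ⟨hC, ?_⟩
  rw [hC.spectrum_real_eq_range_eigenvalues, eigenvalues_smul_add_smul hC]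
  rintro _ ⟨j, rfl⟩
  exact hs (conjDiag_apply_mem hs hA hAs _ j) (conjDiag_apply_mem hs hB hBs _ j) ha hb hab

/-- The real functional calculus `cfc g W` never takes its junk value on Hermitian `W`, even for
discontinuous `g`: the spectrum of a matrix is finite. -/
theorem phi_convexOn_general {g : ℝ → ℝ} (hg : ConvexOn ℝ s g) :
    ConvexOn ℝ {W : Matrix n n 𝕜 | W.IsHermitian ∧ spectrum ℝ W ⊆ s}
      fun W ↦ RCLike.re (cfc g W).trace := by
  have hconv := convex_setOf_isHermitian_spectrum_subset (n := n) (𝕜 := 𝕜) hg.1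
  refine ⟨hconv, fun A hA B hB a b ha hb hab ↦ ?_⟩
  have hC := (hconv hA hB ha hb hab).1
  let U := hC.eigenvectorUnitary
  calc
    RCLike.re (cfc g (a • A + b • B)).trace
      = ∑ j, g (a • conjDiag U.1 A j + b • conjDiag U.1 B j) := by
        rw [re_trace_cfc_eq_sum_eigenvalues hC, eigenvalues_smul_add_smul hC]
        rfl
    _ ≤ ∑ j, (a • g (conjDiag U.1 A j) + b • g (conjDiag U.1 B j)) :=
        Finset.sum_le_sum fun j _ ↦ hg.2 (conjDiag_apply_mem hg.1 hA.1 hA.2 U j)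
          (conjDiag_apply_mem hg.1 hB.1 hB.2 U j) ha hb hab
    _ = a • ∑ j, g (conjDiag U.1 A j) + b • ∑ j, g (conjDiag U.1 B j) := by
        rw [Finset.sum_add_distrib, Finset.smul_sum, Finset.smul_sum]
    _ ≤ a • RCLike.re (cfc g A).trace + b • RCLike.re (cfc g B).trace := by
        gcongr
        · exact sum_map_conjDiag_le_re_trace_cfc hg hA.1 hA.2 U
        · exact sum_map_conjDiag_le_re_trace_cfc hg hB.1 hB.2 U

open scoped ComplexOrder in
lemma posDef_iff_isHermitian_spectrum_subset_Ioi :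
    A.PosDef ↔ A.IsHermitian ∧ spectrum ℝ A ⊆ Set.Ioi 0 := by
  refine ⟨fun hA ↦ ⟨hA.1, ?_⟩, fun ⟨hA, hpos⟩ ↦ hA.posDef_iff_eigenvalues_pos.2 fun i ↦
    hpos (hA.eigenvalues_mem_spectrum_real i)⟩
  rw [hA.1.spectrum_real_eq_range_eigenvalues]
  exact Set.range_subset_iff.2 hA.eigenvalues_pos

lemma phi_eq_trace_cfc {d : ℕ} (g : ℝ → ℝ) (W : Matrix (Fin d) (Fin d) ℝ) :
    phi g W = (cfc g W).trace := by
  by_cases hW : W.IsHermitian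
  · rw [phi, dif_pos hW]
    exact (re_trace_cfc_eq_sum_eigenvalues hW g).symm
  · rw [phi, dif_neg hW, cfc_apply_of_not_predicate (p := IsSelfAdjoint) W hW, trace_zero]

/-- If `g` is convex and continuous on `(0, ∞)`, then `φ(W) = tr(g(W))` is convex on the set
of real symmetric positive definite matrices. -/
theorem phi_convexOn {d : ℕ} (g : ℝ → ℝ)
    (hg_conv : ConvexOn ℝ (Set.Ioi (0 : ℝ)) g)
    (hg_cont : ContinuousOn g (Set.Ioi (0 : ℝ))) :
    ConvexOn ℝ {W : Matrix (Fin d) (Fin d) ℝ | W.PosDef} (phi g) := by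
  simp only [posDef_iff_isHermitian_spectrum_subset_Ioi, funext (phi_eq_trace_cfc g)]
  exact phi_convexOn_general hg_conv
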